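/- For all integers d ≥ 0 and n ≥ 0 we have C_2^d(x) = C_1^{d+1}(x) as formal power series; equivalently, C^d_{2,n} = C^{d+1}_{1,n} for all n. -/

import Mathlib

/-- Full binary trees (every internal node has exactly two children). -/
inductive BTree : Type
  | leaf : BTree
  | node : BTree → BTree → BTree
deriving DecidableEq

namespace BTree

/-- Number of leaves of a full binary tree. -/
def numLeaves : BTree → ℕ
  | leaf => 1
  | node l r => l.numLeaves + r.numLeaves

/-- The list of pairs (left depth, right depth) of the leaves, in preorder. -/
def leafDepths : BTree → List (ℕ × ℕ)
  | leaf => [(0, 0)]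
  | node l r =>
      (l.leafDepths.map fun p => (p.1 + 1, p.2)) ++ (r.leafDepths.map fun p => (p.1, p.2 + 1))

/-- The left depth sequence `ld(t)` of the leaves of `t`, in preorder. -/
def ld (t : BTree) : List ℕ := t.leafDepths.map Prod.fst

/-- The right depth sequence `rd(t)` of the leaves of `t`, in preorder. -/
def rd (t : BTree) : List ℕ := t.leafDepths.map Prod.snd

end BTree

/-- `b ~^d c` : the sequences have equal length and agree at every position where
either entry is `< d`. -/
def DepthEq (d : ℕ) : List ℕ → List ℕ → Prop :=
  List.Forall₂ (fun a b => min a b < d → a = b)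

/-- `b ~_k c` : entrywise congruence mod `k` (and equal length). -/
def ModListEq (k : ℕ) : List ℕ → List ℕ → Prop :=
  List.Forall₂ (fun a b => a % k = b % k)

/-- The relation `t ~ t'` iff `ld(t) ~^d ld(t')` and `rd(t) ~^e rd(t')`. -/
def DeRel (d e : ℕ) (t t' : BTree) : Prop :=
  DepthEq d t.ld t'.ld ∧ DepthEq e t.rd t'.rd

/-- The relation `t ~ t'` iff `ld(t) ~_k^d ld(t')` (i.e. `ld(t) ~_k ld(t')` and
`ld(t) ~^d ld(t')`). -/
def DkRel (d k : ℕ) (t t' : BTree) : Prop :=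
  ModListEq k t.ld t'.ld ∧ DepthEq d t.ld t'.ld

/-- `T_n`: full binary trees with `n+1` leaves. -/
def Tn (n : ℕ) : Type := {t : BTree // t.numLeaves = n + 1}

/-- `C^{d,e}_n`: the number of equivalence classes of the relation `DeRel d e` on `T_n`. -/
noncomputable def Cde (d e n : ℕ) : ℕ :=
  Nat.card (Quot (fun t t' : Tn n => DeRel d e t.1 t'.1))

/-- `C^d_{k,n}`: the number of equivalence classes of `ld(t) ~_k^d ld(t')` on `T_n`. -/
noncomputable def Cdk (d k n : ℕ) : ℕ :=
  Nat.card (Quot (fun t t' : Tn n => DkRel d k t.1 t'.1))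

/-- Directions to a left or right child. -/
inductive Dir : Type
  | L : Dir
  | R : Dir
deriving DecidableEq

/-- The maximal subtree rooted at the node at position `p` (if such a node exists). -/
def subtreeAt : BTree → List Dir → Option BTree
  | t, [] => some t
  | BTree.leaf, _ :: _ => none
  | BTree.node l _, Dir.L :: p => subtreeAt l p
  | BTree.node _ r, Dir.R :: p => subtreeAt r p

/-- Replace the maximal subtree rooted at position `p` by `s` (if the position exists). -/
def replaceAt : BTree → List Dir → BTree → Option BTree
  | _, [], s => some s
  | BTree.leaf, _ :: _, _ => none
  | BTree.node l r, Dir.L :: p, s => (replaceAt l p s).map fun l' => BTree.node l' r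
  | BTree.node l r, Dir.R :: p, s => (replaceAt r p s).map fun r' => BTree.node l r'

/-- `leftAssoc t₀ [t₁,…,t_m] = t₀ ∧ t₁ ∧ ⋯ ∧ t_m` with `∧` performed left to right. -/
def leftAssoc : BTree → List BTree → BTree := List.foldl BTree.node

/-- `t'` is obtained from `t` by a right `k`-rotation at the node at position `p`:
the maximal subtree `t₀ ∧ t₁ ∧ ⋯ ∧ t_{k+1}` rooted there (with `∧` performed left to
right) is replaced by `t₀ ∧ (t₁ ∧ ⋯ ∧ t_{k+1})`.  The left depth of that node is
`p.count Dir.L`. -/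
def IsRightKRot (k : ℕ) (p : List Dir) (t t' : BTree) : Prop :=
  ∃ (t₀ t₁ : BTree) (rest : List BTree), rest.length = k ∧
    subtreeAt t p = some (leftAssoc t₀ (t₁ :: rest)) ∧
    replaceAt t p (BTree.node t₀ (leftAssoc t₁ rest)) = some t'

/-- `IsTopOf s u`: `s` is a subtree of `u` rooted at the root of `u`. -/
def IsTopOf : BTree → BTree → Prop
  | BTree.leaf, _ => True
  | BTree.node l r, BTree.node l' r' => IsTopOf l l' ∧ IsTopOf r r'
  | BTree.node _ _, BTree.leaf => False

/-- `t` contains `s` at left depth `δ`: `t` has a subtree equal to `s` rooted at a node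
of left depth `δ`. -/
def ContainsAt (t s : BTree) (δ : ℕ) : Prop :=
  ∃ (p : List Dir) (u : BTree), subtreeAt t p = some u ∧ p.count Dir.L = δ ∧ IsTopOf s u

/-- `t` avoids `s` at left depth `δ`. -/
def AvoidsAt (t s : BTree) (δ : ℕ) : Prop := ¬ ContainsAt t s δ

/-- `comb_k`: the left-to-right `∧`-product of `k+1` single leaves. -/
def comb (k : ℕ) : BTree := leftAssoc BTree.leaf (List.replicate k BTree.leaf)

/-- `comb_k^1 := t₀ ∧ comb_k` with `t₀` a single leaf. -/
def comb1 (k : ℕ) : BTree := BTree.node BTree.leaf (comb k)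

/-- One left `k`-rotation step, at a node of left depth at least `d-1`, from `t` to `t'`. -/
def LeftRotStep (d k : ℕ) (t t' : BTree) : Prop :=
  ∃ p : List Dir, d - 1 ≤ p.count Dir.L ∧ IsRightKRot k p t' t

/-- The `(d;k)`-order: `s ≤ t` iff `s` is obtained from `t` by finitely many left
`k`-rotations at nodes of left depth at least `d-1`. -/
def dkLE (d k : ℕ) (s t : BTree) : Prop := Relation.ReflTransGen (LeftRotStep d k) t s

/-- `t` is `(d;k)`-minimal. -/
def dkMinimal (d k : ℕ) (t : BTree) : Prop := ∀ s, dkLE d k s t → s = t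

/-- `t` is `(d;k)`-maximal. -/
def dkMaximal (d k : ℕ) (t : BTree) : Prop := ∀ s, dkLE d k t s → s = t

/-- `M^d_{j,n}`: the number of binary trees in `T_n` avoiding `comb_{j+1}` at every left
depth at least `d-1`. -/
noncomputable def Mnum (j d n : ℕ) : ℕ :=
  Nat.card {t : BTree // t.numLeaves = n + 1 ∧ ∀ δ, d - 1 ≤ δ → AvoidsAt t (comb (j + 1)) δ}

/-- `C^d_{k,n}` with the convention `C^0_{k,n} := M^1_{k-1,n}`. -/
noncomputable def Cknum (k : ℕ) : ℕ → ℕ → ℕ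
  | 0, n => Mnum (k - 1) 1 n
  | d + 1, n => Cdk (d + 1) k n

/-- The generating function `C_k^d(x) = Σ_{n≥0} C^d_{k,n} x^{n+1}`. -/
noncomputable def CkdX (k d : ℕ) : PowerSeries ℚ :=
  PowerSeries.mk fun m => match m with
    | 0 => 0
    | n + 1 => (Cknum k d n : ℚ)

/-- The generating function `M_j^d(x) = Σ_{n≥0} M^d_{j,n} x^{n+1}`. -/
noncomputable def MkdX (j d : ℕ) : PowerSeries ℚ :=
  PowerSeries.mk fun m => match m with
    | 0 => 0
    | n + 1 => (Mnum j d n : ℚ)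

/-!
A tree is determined by its left depth sequence, and the left depth sequences are exactly the
sequences ending in `0` whose other entries are positive and which, read from left to right, drop by
at most one at each step. For `d ≥ 1` and `k ≤ 2` replacing each entry by the least depth equivalent
to it under `~_k^d` preserves this description, because depths below `d` are fixed and depths `≥ d`
are moved into `{d, …, d + k - 1}`, where any two values differ by at most one. Hence for
`k ∈ {1, 2}` each class contains exactly one tree all of whose leaves have left depth `< d + k`.
Since avoiding `comb_2` everywhere amounts to having all left depths `< 2`, the number of trees with
left depths `< d + k` is `C^d_{k,n}` for `(d, k) = (0, 2)` too, and `d + 2 = (d + 1) + 1`.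
-/

namespace BTree

theorem ld_leaf : leaf.ld = [0] := rfl

theorem ld_node (l r : BTree) : (node l r).ld = l.ld.map (· + 1) ++ r.ld := by
  simp [ld, leafDepths, Function.comp_def]

theorem length_ld (t : BTree) : t.ld.length = t.numLeaves := by
  induction t with
  | leaf => rfl
  | node l r ihl ihr => simp [ld_node, numLeaves, ihl, ihr]

theorem ld_ne_nil (t : BTree) : t.ld ≠ [] := by
  induction t <;> simp_all [ld_leaf, ld_node]

theorem exists_ld_node_eq_succ_cons (l r : BTree) : ∃ a s, (node l r).ld = (a + 1) :: s := by
  obtain ⟨a, s, hl⟩ := List.exists_cons_of_ne_nil l.ld_ne_nil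
  exact ⟨a, s.map (· + 1) ++ r.ld, by simp [ld_node, hl]⟩

-- The shift `c` is for the induction: left subtrees have their left depths raised by one.
theorem eq_and_eq_of_map_ld_append_eq (t u : BTree) (c : ℕ) (s s' : List ℕ)
    (h : t.ld.map (· + c) ++ s = u.ld.map (· + c) ++ s') : t = u ∧ s = s' := by
  induction t generalizing u c s s' with
  | leaf =>
    cases u with
    | leaf => simpa [ld_leaf] using h
    | node l r =>
      obtain ⟨a, m, hlr⟩ := exists_ld_node_eq_succ_cons l r
      simp [ld_leaf, hlr] at h
  | node l r ihl ihr =>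
    cases u with
    | leaf =>
      obtain ⟨a, m, hlr⟩ := exists_ld_node_eq_succ_cons l r
      simp [ld_leaf, hlr] at h
    | node l' r' =>
      simp only [ld_node, List.map_append, List.map_map, List.append_assoc, Function.comp_def,
        add_assoc] at h
      obtain ⟨rfl, hr⟩ := ihl _ _ _ _ h
      obtain ⟨rfl, hs⟩ := ihr _ _ _ _ hr
      exact ⟨rfl, hs⟩

theorem ld_injective : Function.Injective ld := fun t u h =>
  (eq_and_eq_of_map_ld_append_eq t u 0 [] [] (by rw [h])).1

theorem exists_ld_eq_cons_cons {t : BTree} {a b : ℕ} {s : List ℕ} (ht : t.ld = b :: s)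
    (ha : 0 < a) (hab : a ≤ b + 1) : ∃ u : BTree, u.ld = a :: b :: s := by
  induction t generalizing a b s with
  | leaf =>
    obtain ⟨rfl, rfl⟩ : 0 = b ∧ [] = s := by simpa [ld_leaf] using ht
    obtain rfl : a = 1 := by omega
    exact ⟨node leaf leaf, rfl⟩
  | node l r ihl =>
    obtain rfl | ha1 : a = 1 ∨ 1 < a := by omega
    · exact ⟨node leaf (node l r), by rw [ld_node, ht]; rfl⟩
    · obtain ⟨c, m, hl⟩ := List.exists_cons_of_ne_nil l.ld_ne_nil
      obtain ⟨rfl, rfl⟩ : c + 1 = b ∧ m.map (· + 1) ++ r.ld = s := by simpa [ld_node, hl] using ht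
      obtain ⟨a, rfl⟩ : ∃ a', a = a' + 1 := ⟨a - 1, by omega⟩
      obtain ⟨u, hu⟩ : ∃ u : BTree, u.ld = a :: c :: m := ihl hl (by omega) (by omega)
      exact ⟨node u r, by simp [ld_node, hu]⟩

end BTree

/-- The sequences that occur as left depth sequences of trees (`isLeftDepthSeq_iff`), characterised
without reference to trees. -/
def IsLeftDepthSeq (s : List ℕ) : Prop :=
  s.IsChain (fun a b => 0 < a ∧ a ≤ b + 1) ∧ s.getLast? = some 0

theorem BTree.isLeftDepthSeq_ld (t : BTree) : IsLeftDepthSeq t.ld := by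
  induction t with
  | leaf => simp [IsLeftDepthSeq, ld_leaf]
  | node l r ihl ihr =>
    obtain ⟨hl, hl0⟩ := ihl
    obtain ⟨hr, hr0⟩ := ihr
    have hl1 : (l.ld.map (· + 1)).IsChain (fun a b => 0 < a ∧ a ≤ b + 1) :=
      (List.isChain_map _).2 (hl.imp fun a b h => by omega)
    rw [ld_node]
    exact ⟨List.isChain_append.2 ⟨hl1, hr, by simp [hl0]⟩, by simp [hr0]⟩

theorem isLeftDepthSeq_iff {s : List ℕ} : IsLeftDepthSeq s ↔ ∃ t : BTree, t.ld = s := by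
  refine ⟨fun hs => ?_, fun ⟨t, ht⟩ => ht ▸ t.isLeftDepthSeq_ld⟩
  induction s with
  | nil => simp [IsLeftDepthSeq] at hs
  | cons a s ih =>
    cases s with
    | nil => exact ⟨.leaf, by simpa [BTree.ld_leaf, IsLeftDepthSeq, eq_comm] using hs⟩
    | cons b s =>
      obtain ⟨⟨ha, hab⟩, hbs⟩ := List.isChain_cons_cons.1 hs.1
      obtain ⟨t, ht⟩ := ih ⟨hbs, by simpa using hs.2⟩
      exact BTree.exists_ld_eq_cons_cons ht ha hab

/-- The normal form of a depth `a` under the relation `~_k^d`: the least depth equivalent to `a`. -/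
def truncMod (d k a : ℕ) : ℕ := if a < d then a else d + (a - d) % k

section truncMod

variable {d k a b : ℕ}

theorem truncMod_eq_truncMod_iff :
    truncMod d k a = truncMod d k b ↔ a % k = b % k ∧ (min a b < d → a = b) := by
  by_cases h : d ≤ a ∧ d ≤ b
  · obtain ⟨a, rfl⟩ := Nat.exists_eq_add_of_le h.1
    obtain ⟨b, rfl⟩ := Nat.exists_eq_add_of_le h.2
    have hmod : (d + a) % k = (d + b) % k ↔ a % k = b % k := Nat.ModEq.add_iff_left rfl
    simp [truncMod, hmod]
  · grind [truncMod]

theorem truncMod_lt (hk : 0 < k) : truncMod d k a < d + k := by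
  have := Nat.mod_lt (a - d) hk
  grind [truncMod]

theorem truncMod_of_lt (h : a < d + k) : truncMod d k a = a := by
  have (had : d ≤ a) : (a - d) % k = a - d := Nat.mod_eq_of_lt (by omega)
  grind [truncMod]

theorem map_truncMod_of_forall_lt {s : List ℕ} (hs : ∀ a ∈ s, a < d + k) :
    s.map (truncMod d k) = s :=
  (List.map_congr_left fun a ha => truncMod_of_lt (hs a ha)).trans s.map_id

theorem IsLeftDepthSeq.map_truncMod {s : List ℕ} (hd : 0 < d) (hk : k ≤ 2)
    (hs : IsLeftDepthSeq s) : IsLeftDepthSeq (s.map (truncMod d k)) := by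
  refine ⟨(List.isChain_map _).2 (hs.1.imp fun a b h => ?_), ?_⟩
  · unfold truncMod
    interval_cases k <;> grind
  · simp [hs.2, truncMod, hd]

end truncMod

theorem forall₂_and_iff {α β : Type*} {P Q : α → β → Prop} {s : List α} {s' : List β} :
    List.Forall₂ (fun a b => P a b ∧ Q a b) s s' ↔ List.Forall₂ P s s' ∧ List.Forall₂ Q s s' := by
  refine ⟨fun h => ⟨h.imp fun _ _ => And.left, h.imp fun _ _ => And.right⟩, fun ⟨hP, hQ⟩ => ?_⟩
  exact List.forall₂_iff_zip.2 ⟨hP.length_eq,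
    fun h => ⟨List.forall₂_zip hP h, List.forall₂_zip hQ h⟩⟩

section DkRel

variable {d k : ℕ}

theorem dkRel_iff {t u : BTree} :
    DkRel d k t u ↔ t.ld.map (truncMod d k) = u.ld.map (truncMod d k) := by
  rw [← List.forall₂_eq_eq_eq, List.forall₂_map_left_iff, List.forall₂_map_right_iff]
  simp only [truncMod_eq_truncMod_iff, DkRel, ModListEq, DepthEq, forall₂_and_iff]

theorem dkRel_equivalence : Equivalence (DkRel d k) where
  refl _ := dkRel_iff.2 rfl
  symm h := dkRel_iff.2 (dkRel_iff.1 h).symm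
  trans h h' := dkRel_iff.2 ((dkRel_iff.1 h).trans (dkRel_iff.1 h'))

theorem DkRel.numLeaves_eq {t u : BTree} (h : DkRel d k t u) : t.numLeaves = u.numLeaves := by
  simpa [BTree.length_ld] using h.1.length_eq

theorem DkRel.eq_of_forall_ld_lt {t u : BTree} (h : DkRel d k t u)
    (ht : ∀ a ∈ t.ld, a < d + k) (hu : ∀ a ∈ u.ld, a < d + k) : t = u := by
  rw [dkRel_iff, map_truncMod_of_forall_lt ht, map_truncMod_of_forall_lt hu] at h
  exact BTree.ld_injective h

theorem exists_dkRel_forall_ld_lt (hd : 0 < d) (hk₀ : 0 < k) (hk : k ≤ 2) (t : BTree) :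
    ∃ u, DkRel d k u t ∧ ∀ a ∈ u.ld, a < d + k := by
  obtain ⟨u, hu⟩ := isLeftDepthSeq_iff.1 (t.isLeftDepthSeq_ld.map_truncMod hd hk)
  have hu_lt : ∀ a ∈ u.ld, a < d + k := by
    simpa [hu] using fun a _ => truncMod_lt hk₀
  exact ⟨u, dkRel_iff.2 (by rw [map_truncMod_of_forall_lt hu_lt, hu]), hu_lt⟩

end DkRel

/-- The trees in `T_n` all of whose leaves have left depth less than `m`; the common combinatorial
model of the numbers in the theorem. -/
def TnLt (m n : ℕ) : Type := {t : BTree // t.numLeaves = n + 1 ∧ ∀ a ∈ t.ld, a < m}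

theorem cdk_eq_card_tnLt {d k : ℕ} (hd : 0 < d) (hk₀ : 0 < k) (hk : k ≤ 2) (n : ℕ) :
    Cdk d k n = Nat.card (TnLt (d + k) n) := by
  have hequiv : Equivalence fun t u : Tn n => DkRel d k t.1 u.1 := dkRel_equivalence.comap _
  refine (Nat.card_congr (.ofBijective (fun t => Quot.mk _ ⟨t.1, t.2.1⟩) ⟨?_, ?_⟩)).symm
  · intro t u h
    exact Subtype.ext (((hequiv.quot_mk_eq_iff _ _).1 h).eq_of_forall_ld_lt t.2.2 u.2.2)
  · rintro ⟨t, ht⟩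
    obtain ⟨u, hut, hu⟩ := exists_dkRel_forall_ld_lt hd hk₀ hk t
    exact ⟨⟨u, hut.numLeaves_eq.trans ht, hu⟩, Quot.sound hut⟩

theorem containsAt_leaf {s : BTree} {δ : ℕ} :
    ContainsAt .leaf s δ ↔ δ = 0 ∧ IsTopOf s .leaf := by
  constructor
  · rintro ⟨_ | _, u, hp, rfl, hu⟩ <;> simp_all [subtreeAt]
  · rintro ⟨rfl, hs⟩
    exact ⟨[], .leaf, rfl, rfl, hs⟩

theorem containsAt_node {l r s : BTree} {δ : ℕ} :
    ContainsAt (.node l r) s δ ↔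
      δ = 0 ∧ IsTopOf s (.node l r) ∨ (∃ ε, ContainsAt l s ε ∧ ε + 1 = δ) ∨ ContainsAt r s δ := by
  constructor
  · rintro ⟨_ | ⟨_ | _, p⟩, u, hp, hδ, hu⟩
    · simp_all [subtreeAt]
    · exact .inr (.inl ⟨p.count .L, ⟨p, u, hp, rfl, hu⟩, by simpa using hδ⟩)
    · exact .inr (.inr ⟨p, u, hp, by simpa using hδ, hu⟩)
  · rintro (⟨rfl, hs⟩ | ⟨ε, ⟨p, u, hp, rfl, hu⟩, rfl⟩ | ⟨p, u, hp, rfl, hu⟩)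
    · exact ⟨[], _, rfl, rfl, hs⟩
    · exact ⟨.L :: p, u, hp, by simp, hu⟩
    · exact ⟨.R :: p, u, hp, by simp, hu⟩

theorem not_isTopOf_comb_two_leaf : ¬ IsTopOf (comb 2) .leaf := id

theorem isTopOf_comb_two_node {l r : BTree} :
    IsTopOf (comb 2) (.node l r) ↔ l ≠ .leaf := by
  cases l <;> simp [comb, leftAssoc, IsTopOf]

theorem BTree.exists_mem_ld_pos_iff {t : BTree} : (∃ a ∈ t.ld, 0 < a) ↔ t ≠ leaf := by
  cases t with
  | leaf => simp [ld_leaf]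
  | node l r =>
    obtain ⟨a, s, h⟩ := exists_ld_node_eq_succ_cons l r
    simp [h]

theorem exists_containsAt_comb_two_iff {t : BTree} {d : ℕ} :
    (∃ δ, d ≤ δ ∧ ContainsAt t (comb 2) δ) ↔ ∃ a ∈ t.ld, d + 2 ≤ a := by
  induction t generalizing d with
  | leaf => simp [containsAt_leaf, not_isTopOf_comb_two_leaf, BTree.ld_leaf]
  | node l r ihl ihr =>
    have hld : (∃ a ∈ (BTree.node l r).ld, d + 2 ≤ a) ↔
        (∃ a ∈ l.ld, d + 1 ≤ a) ∨ ∃ a ∈ r.ld, d + 2 ≤ a := by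
      simp [BTree.ld_node, or_and_right, exists_or]
    rw [hld, ← ihr]
    cases d with
    | zero =>
      have hl (ε : ℕ) (h : ContainsAt l (comb 2) ε) : l ≠ .leaf := by
        rintro rfl
        exact not_isTopOf_comb_two_leaf (containsAt_leaf.1 h).2
      simp only [zero_add, Nat.succ_le_iff, BTree.exists_mem_ld_pos_iff, containsAt_node,
        isTopOf_comb_two_node]
      grind
    | succ d =>
      simp only [← ihl, containsAt_node]
      grind

theorem mnum_one_eq_card_tnLt (d n : ℕ) : Mnum 1 (d + 1) n = Nat.card (TnLt (d + 2) n) := by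
  refine Nat.card_congr (Equiv.subtypeEquivRight fun t => and_congr_right fun _ => ?_)
  simpa [AvoidsAt] using not_congr (exists_containsAt_comb_two_iff (t := t) (d := d))

theorem cknum_two_eq_card_tnLt (d n : ℕ) : Cknum 2 d n = Nat.card (TnLt (d + 2) n) := by
  cases d with
  | zero => exact mnum_one_eq_card_tnLt 0 n
  | succ d => exact cdk_eq_card_tnLt d.succ_pos two_pos le_rfl n

/-- for `d ≥ 0`, `C_2^d(x) = C_1^{d+1}(x)`; equivalently
`C^d_{2,n} = C^{d+1}_{1,n}` for all `n` (with the convention `C_k^0(x) := M^1_{k-1}(x)`). -/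
theorem stmt17 (d : ℕ) :
    CkdX 2 d = CkdX 1 (d + 1) ∧ ∀ n : ℕ, Cknum 2 d n = Cknum 1 (d + 1) n := by
  have hcoeff (n : ℕ) : Cknum 2 d n = Cknum 1 (d + 1) n :=
    (cknum_two_eq_card_tnLt d n).trans
      (cdk_eq_card_tnLt d.succ_pos one_pos one_le_two n).symm
  exact ⟨by simp only [CkdX, hcoeff], hcoeff⟩
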